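/- (Proposition 2.) Let (u_{[0,t−1]}, y_{[0,t−1]}) be input-output data with u(s) ∈ ℝ^m, y(s) ∈ ℝ^p and u_{[0,t−1]} ≠ 0. Then ℓ_min,t = q_t and n_min,t = Σ_{i=0}^{ℓ_min,t} δ_{i,t}. -/

import Mathlib

/-!
Let `L_k = leadSpace u y t k` be the space of leading output coefficients of the difference
equations of order `k` satisfied by the data. These spaces increase with `k`, and `δ_{k,t}` is the
codimension of `L_k` in `ℝ^p`.

Lower bounds: given an explaining system, eliminating the state shows that `η ∈ L_k` as soon as
`η C A^k` lies in the row span of `Ω_{k-1}`; hence `δ_{k,t} ≤ rank Ω_k - rank Ω_{k-1}`. At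
`k = ℓ(C,A)` this reads `δ_{k,t} = 0`, so that `q_t ≤ ℓ(C,A)`, and summing over `k` bounds the
number of states from below by any partial sum of the `δ_{i,t}`.

Attainment: a basis of `ℝ^p` adapted to the flag `L_0 ≤ ⋯ ≤ L_q = ℝ^p`, where `q = q_t`, yields
`p` difference equations with independent leading coefficients whose orders `μ_i ≤ q` add up to
`∑ δ_{k,t}`. They are realised by the observer canonical form, which has `∑ μ_i` states and lag at
most `q`, and whose initial state is the part of the outputs that the truncated difference equations
leave unexplained.
-/

open Matrix

/-- The Hankel matrix with `rows` block rows and `cols` columns built from the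
vector sequence `f` (starting at time `0`): the block entry in block row `r` and
column `c` is `f (r + c)`.  Thus `H_k(f_{[0,t-1]}) = hankel f (k+1) (t-k)`. -/
def hankel {d : ℕ} (f : ℕ → Fin d → ℝ) (rows cols : ℕ) :
    Matrix (Fin rows × Fin d) (Fin cols) ℝ :=
  Matrix.of fun r c => f ((r.1 : ℕ) + (c : ℕ)) r.2

/-- `u_{[0,t-1]}` is persistently exciting of order `k+1`, i.e. the Hankel
matrix `H_k(u_{[0,t-1]})` (with `k+1` block rows) has full row rank. -/
def PersistentlyExciting {m : ℕ} (u : ℕ → Fin m → ℝ) (t k : ℕ) : Prop :=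
  (hankel u (k + 1) (t - k)).rank = (k + 1) * m

/-- The Hankel matrix `H_{k,t}`: `H_k(y_{[0,t-1]})` stacked on top of
`H_k(u_{[0,t-1]})`. -/
def Hkt {m p : ℕ} (u : ℕ → Fin m → ℝ) (y : ℕ → Fin p → ℝ) (k t : ℕ) :
    Matrix ((Fin (k + 1) × Fin p) ⊕ (Fin (k + 1) × Fin m)) (Fin (t - k)) ℝ :=
  Matrix.fromRows (hankel y (k + 1) (t - k)) (hankel u (k + 1) (t - k))

/-- The matrix `G_{k,t}`: `H_{k-1}(y_{[0,t-2]})` (which has `k` block rows and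
`t-k` columns) stacked on top of `H_k(u_{[0,t-1]})`. -/
def Gkt {m p : ℕ} (u : ℕ → Fin m → ℝ) (y : ℕ → Fin p → ℝ) (k t : ℕ) :
    Matrix ((Fin k × Fin p) ⊕ (Fin (k + 1) × Fin m)) (Fin (t - k)) ℝ :=
  Matrix.fromRows (hankel y k (t - k)) (hankel u (k + 1) (t - k))

/-- `δ_{k,t} = rank H_{k,t} - rank G_{k,t}`. -/
noncomputable def deltaKT {m p : ℕ} (u : ℕ → Fin m → ℝ) (y : ℕ → Fin p → ℝ) (k t : ℕ) : ℕ :=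
  (Hkt u y k t).rank - (Gkt u y k t).rank

/-- `q_t`: the smallest `k ∈ [0, t-1]` with `δ_{k,t} = 0`. -/
noncomputable def qT {m p : ℕ} (u : ℕ → Fin m → ℝ) (y : ℕ → Fin p → ℝ) (t : ℕ) : ℕ :=
  sInf {k | k ≤ t - 1 ∧ deltaKT u y k t = 0}

/-- A discrete-time linear system `(A, B, C, D)` with `m` inputs, `p` outputs
and `n` states. -/
structure LinSys (m p : ℕ) where
  n : ℕ
  A : Matrix (Fin n) (Fin n) ℝ
  B : Matrix (Fin n) (Fin m) ℝ
  C : Matrix (Fin p) (Fin n) ℝ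
  D : Matrix (Fin p) (Fin m) ℝ

/-- `obsMat sys k` is the observability matrix `Ω_{k-1}` with `k` block rows,
stacking `C, CA, ..., CA^(k-1)`. -/
def obsMat {m p : ℕ} (sys : LinSys m p) (k : ℕ) :
    Matrix (Fin k × Fin p) (Fin sys.n) ℝ :=
  Matrix.of fun r j => (sys.C * sys.A ^ (r.1 : ℕ)) r.2 j

/-- The lag `ℓ(C,A)`: the smallest `k ≥ 0` with `rank Ω_k = rank Ω_{k-1}`. -/
noncomputable def lag {m p : ℕ} (sys : LinSys m p) : ℕ :=
  sInf {k | (obsMat sys (k + 1)).rank = (obsMat sys k).rank}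

/-- The controllability matrix with `k` blocks `[B, AB, ..., A^(k-1)B]`. -/
def ctrlMat {m p : ℕ} (sys : LinSys m p) (k : ℕ) :
    Matrix (Fin sys.n) (Fin k × Fin m) ℝ :=
  Matrix.of fun i c => (sys.A ^ (c.1 : ℕ) * sys.B) i c.2

def Observable {m p : ℕ} (sys : LinSys m p) : Prop :=
  (obsMat sys sys.n).rank = sys.n

def Controllable {m p : ℕ} (sys : LinSys m p) : Prop :=
  (ctrlMat sys sys.n).rank = sys.n

def MinimalSys {m p : ℕ} (sys : LinSys m p) : Prop :=
  Controllable sys ∧ Observable sys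

/-- The system explains the data `(u_{[0,t-1]}, y_{[0,t-1]})` with the
compatible state sequence `x`. -/
def ExplainsWith {m p : ℕ} (sys : LinSys m p) (t : ℕ) (u : ℕ → Fin m → ℝ)
    (y : ℕ → Fin p → ℝ) (x : ℕ → Fin sys.n → ℝ) : Prop :=
  ∀ s < t, x (s + 1) = sys.A.mulVec (x s) + sys.B.mulVec (u s) ∧
    y s = sys.C.mulVec (x s) + sys.D.mulVec (u s)

/-- The system explains (equivalently, generates) the data
`(u_{[0,t-1]}, y_{[0,t-1]})`. -/
def Explains {m p : ℕ} (sys : LinSys m p) (t : ℕ) (u : ℕ → Fin m → ℝ)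
    (y : ℕ → Fin p → ℝ) : Prop :=
  ∃ x : ℕ → Fin sys.n → ℝ, ExplainsWith sys t u y x

/-- `ℰ_t`, the set of systems explaining the data. -/
def ExplSet {m p : ℕ} (t : ℕ) (u : ℕ → Fin m → ℝ) (y : ℕ → Fin p → ℝ) :
    Set (LinSys m p) :=
  {sys | Explains sys t u y}

/-- `ℓ_min,t`: the smallest lag among explaining systems. -/
noncomputable def lMin {m p : ℕ} (t : ℕ) (u : ℕ → Fin m → ℝ) (y : ℕ → Fin p → ℝ) : ℕ :=
  sInf {ℓ | ∃ sys : LinSys m p, Explains sys t u y ∧ lag sys = ℓ}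

/-- `n_min,t`: the smallest state dimension among explaining systems. -/
noncomputable def nMin {m p : ℕ} (t : ℕ) (u : ℕ → Fin m → ℝ) (y : ℕ → Fin p → ℝ) : ℕ :=
  sInf {n | ∃ sys : LinSys m p, Explains sys t u y ∧ sys.n = n}

/-- Two systems are isomorphic: `D₁ = D₂` and there is an invertible state
transformation `S` with `S A₁ = A₂ S`, `S B₁ = B₂`, `C₁ = C₂ S`. -/
def Isomorphic {m p : ℕ} (s1 s2 : LinSys m p) : Prop :=
  s1.D = s2.D ∧ ∃ (S : Matrix (Fin s2.n) (Fin s1.n) ℝ)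
    (S' : Matrix (Fin s1.n) (Fin s2.n) ℝ),
    S * S' = 1 ∧ S' * S = 1 ∧ S * s1.A = s2.A * S ∧ S * s1.B = s2.B ∧
    s1.C = s2.C * S

/-- `M`, the set of minimal systems. -/
def Mset (m p : ℕ) : Set (LinSys m p) := {sys | MinimalSys sys}

/-- `S_{L,N}`, the set of systems with lag at most `L` and at most `N` states. -/
def SLN (m p L N : ℕ) : Set (LinSys m p) := {sys | lag sys ≤ L ∧ sys.n ≤ N}

/-- The data `(u_{[0,t-1]}, y_{[0,t-1]})` are informative for system
identification (with prior bounds `L`, `N`, and true state dimension `nTrue`). -/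
def Informative {m p : ℕ} (t : ℕ) (u : ℕ → Fin m → ℝ) (y : ℕ → Fin p → ℝ)
    (nTrue L N : ℕ) : Prop :=
  (ExplSet t u y ∩ Mset m p ∩ SLN m p L N =
      {sys ∈ ExplSet t u y | sys.n = nTrue} ∩ Mset m p ∩ SLN m p L N) ∧
  ∀ s1 ∈ ExplSet t u y ∩ Mset m p ∩ SLN m p L N,
    ∀ s2 ∈ ExplSet t u y ∩ Mset m p ∩ SLN m p L N, Isomorphic s1 s2

open Module Submodule

section LinearAlgebra

variable {K V W : Type*} [DivisionRing K] [AddCommGroup V] [Module K V] [AddCommGroup W]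
  [Module K W]

theorem finrank_quotient_comap_add_finrank [FiniteDimensional K W] (f : V →ₗ[K] W)
    (G : Submodule K W) :
    finrank K (V ⧸ G.comap f) + finrank K G = finrank K ↥(G ⊔ LinearMap.range f) := by
  have hker : LinearMap.ker (G.mkQ ∘ₗ f) = G.comap f := by rw [LinearMap.ker_comp, ker_mkQ]
  have hrange : LinearMap.range (G.mkQ ∘ₗ f) = (G ⊔ LinearMap.range f).map G.mkQ := by
    simp [LinearMap.range_comp, Submodule.map_sup]
  have hquot := (LinearMap.quotKerEquivRange (G.mkQ ∘ₗ f)).finrank_eq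
  rw [hker, hrange] at hquot
  have hthird := (quotientQuotientEquivQuotient G (G ⊔ LinearMap.range f) le_sup_left).finrank_eq
  have hmap := finrank_quotient_add_finrank ((G ⊔ LinearMap.range f).map G.mkQ)
  have hG := finrank_quotient_add_finrank G
  have hsup := finrank_quotient_add_finrank (G ⊔ LinearMap.range f)
  omega

theorem finrank_quotient_antitone [FiniteDimensional K V] {G H : Submodule K V} (h : G ≤ H) :
    finrank K (V ⧸ H) ≤ finrank K (V ⧸ G) :=
  LinearMap.finrank_le_finrank_of_surjective (factor_surjective h)

theorem exists_linearIndepOn_adapted (L : ℕ → Submodule K V) (hL : Monotone L) (q : ℕ) :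
    ∃ s : Set V, LinearIndepOn K id s ∧ s ⊆ L q ∧ ∀ k < q, (L k : Set V) ⊆ span K (s ∩ L k) := by
  induction q with
  | zero => exact ⟨∅, linearIndepOn_empty _ _, Set.empty_subset _, by simp⟩
  | succ q ih =>
    obtain ⟨s, hs, hsq, hspan⟩ := ih
    obtain ⟨b, hbq, hsb, hqb, hb⟩ := exists_linearIndepOn_id_extension hs hsq
    refine ⟨b, hb, hbq.trans (hL q.le_succ), fun k hk => ?_⟩
    obtain hk | rfl := Nat.lt_succ_iff_lt_or_eq.1 hk
    · exact (hspan k hk).trans (span_mono (Set.inter_subset_inter_left _ hsb))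
    · rwa [Set.inter_eq_left.2 hbq]

theorem exists_basis_adapted {ι : Type*} (b₀ : Basis ι K V) {L : ℕ → Submodule K V}
    (hL : Monotone L) {q : ℕ} (hq : L q = ⊤) :
    ∃ b : Basis ι K V, ∀ k ≤ q, span K (b '' {i | b i ∈ L k}) = L k := by
  obtain ⟨s, hs, -, hspan⟩ := exists_linearIndepOn_adapted L hL (q + 1)
  have hs_top : ⊤ ≤ span K (Set.range ((↑) : s → V)) := by
    simpa [hq] using hspan q q.lt_succ_self
  let b := Basis.mk hs.linearIndependent hs_top
  refine ⟨b.reindex (b.indexEquiv b₀), fun k hk => le_antisymm (span_le.2 ?_) ?_⟩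
  · rintro _ ⟨i, hi, rfl⟩
    exact hi
  · refine (hspan k (Nat.lt_succ_of_le hk)).trans (span_mono ?_)
    rintro v ⟨hvs, hvL⟩
    exact ⟨b.indexEquiv b₀ ⟨v, hvs⟩, by simpa [b] using hvL, by simp [b]⟩

theorem finrank_quotient_span_image_basis {ι : Type*} [Fintype ι] (b : Basis ι K V) (s : Set ι)
    [DecidablePred (· ∈ s)] :
    finrank K (V ⧸ span K (b '' s)) = Finset.card {i | i ∉ s} := by
  have := b.finiteDimensional_of_finite
  have hs : finrank K (span K (b '' s)) = Finset.card {i | i ∈ s} := by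
    have := finrank_span_eq_card (b.linearIndependent.comp ((↑) : s → ι) Subtype.val_injective)
    rwa [Set.range_comp, Subtype.range_coe, Fintype.card_subtype] at this
  have hquot := finrank_quotient_add_finrank (span K (b '' s))
  have hcard := Finset.card_filter_add_card_filter_not (s := Finset.univ) (· ∈ s)
  rw [Finset.card_univ, ← finrank_eq_card_basis b] at hcard
  omega

theorem sum_eq_sum_range_card_lt {ι : Type*} [Fintype ι] {μ : ι → ℕ} {q : ℕ}
    (hμ : ∀ i, μ i ≤ q) :
    ∑ i, μ i = ∑ k ∈ Finset.range q, Finset.card {i | k < μ i} := by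
  have hfilter : ∀ i, {k ∈ Finset.range q | k < μ i} = Finset.range (μ i) := fun i => by
    ext k
    simpa using fun hk => hk.trans_le (hμ i)
  calc ∑ i, μ i = ∑ i, Finset.card {k ∈ Finset.range q | k < μ i} := by simp [hfilter]
    _ = _ := Finset.sum_card_bipartiteAbove_eq_sum_card_bipartiteBelow fun i k => k < μ i

theorem exists_basis_exists_degree {ι : Type*} [Fintype ι] (b₀ : Basis ι K V)
    {L : ℕ → Submodule K V} (hL : Monotone L) {q : ℕ} (hq : L q = ⊤) :
    ∃ (b : Basis ι K V) (μ : ι → ℕ), (∀ i, μ i ≤ q ∧ b i ∈ L (μ i)) ∧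
      ∑ i, μ i = ∑ k ∈ Finset.range q, finrank K (V ⧸ L k) := by
  classical
  obtain ⟨b, hb⟩ := exists_basis_adapted b₀ hL hq
  have hex : ∀ i, ∃ k, b i ∈ L k := fun i => ⟨q, hq ▸ mem_top⟩
  let μ : ι → ℕ := fun i => Nat.find (hex i)
  have hμL : ∀ i, b i ∈ L (μ i) := fun i => Nat.find_spec (hex i)
  have hμq : ∀ i, μ i ≤ q := fun i => Nat.find_le (hq ▸ mem_top)
  have hlt : ∀ i k, k < μ i ↔ b i ∉ L k := fun i k =>
    ⟨Nat.find_min (hex i), fun hik => not_le.1 fun hk => hik (hL hk (hμL i))⟩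
  refine ⟨b, μ, fun i => ⟨hμq i, hμL i⟩, ?_⟩
  rw [sum_eq_sum_range_card_lt hμq]
  refine Finset.sum_congr rfl fun k hk => ?_
  have hfinrank := finrank_quotient_span_image_basis b {i | b i ∈ L k}
  rw [hb k (Finset.mem_range.1 hk).le] at hfinrank
  simpa only [hlt, Set.mem_ofPred_eq] using hfinrank.symm

end LinearAlgebra

section RowSpace

variable {K a b c : Type*}

/-- The span of the rows of a matrix. -/
def rowSpace [Semiring K] (M : Matrix a c K) : Submodule K (c → K) :=
  span K (Set.range M.row)

theorem mem_rowSpace_iff [CommSemiring K] [Fintype a] {M : Matrix a c K} {w : c → K} :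
    w ∈ rowSpace M ↔ ∃ v, v ᵥ* M = w := by
  rw [rowSpace, ← range_vecMulLinear]
  rfl

theorem rowSpace_fromRows [Semiring K] (M : Matrix a c K) (N : Matrix b c K) :
    rowSpace (fromRows M N) = rowSpace M ⊔ rowSpace N := by
  rw [rowSpace, rowSpace, rowSpace, ← span_union]
  exact congrArg (span K) (Set.Sum.elim_range M.row N.row)

theorem rowSpace_succ [Semiring K] {k : ℕ} (M : Matrix (Fin (k + 1) × a) c K) :
    rowSpace M = rowSpace (M.submatrix (Prod.map Fin.castSucc id) id) ⊔
      rowSpace (M.submatrix (Prod.mk (Fin.last k)) id) := by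
  rw [rowSpace, rowSpace, rowSpace, ← span_union]
  congr 1
  ext w
  simp only [Set.mem_union, Set.mem_range, Prod.exists, Fin.exists_fin_succ']
  rfl

theorem rank_eq_rank_add_finrank_quotient [Field K] [Finite a] [Fintype b] [Fintype c] {a' : Type*}
    [Finite a'] {M' : Matrix a' c K} {M : Matrix a c K} {N : Matrix b c K}
    (h : rowSpace M' = rowSpace M ⊔ rowSpace N) :
    M'.rank = M.rank + finrank K ((b → K) ⧸ (rowSpace M).comap N.vecMulLinear) := by
  rw [rank_eq_finrank_span_row, rank_eq_finrank_span_row, add_comm]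
  change finrank K (rowSpace M') = _ + finrank K (rowSpace M)
  rw [finrank_quotient_comap_add_finrank, range_vecMulLinear, h]
  rfl

end RowSpace

section Data

variable {m p t : ℕ}

theorem mem_rowSpace_hankel_iff {d : ℕ} {f : ℕ → Fin d → ℝ} {rows cols : ℕ} {w : Fin cols → ℝ} :
    w ∈ rowSpace (hankel f rows cols) ↔
      ∃ a : ℕ → Fin d → ℝ, ∀ c, w c = ∑ r ∈ Finset.range rows, a r ⬝ᵥ f (c + r) := by
  have hvecMul : ∀ (a : ℕ → Fin d → ℝ) (c : Fin cols),
      ((fun i => a i.1 i.2) ᵥ* hankel f rows cols) c =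
        ∑ r ∈ Finset.range rows, a r ⬝ᵥ f (c + r) := fun a c => by
    simp only [Finset.sum_range, vecMul, dotProduct, Fintype.sum_prod_type, hankel, of_apply,
      add_comm]
  rw [mem_rowSpace_iff]
  refine ⟨fun ⟨v, hv⟩ => ?_, fun ⟨a, ha⟩ => ⟨_, funext fun c => (hvecMul a c).trans (ha c).symm⟩⟩
  refine ⟨fun r i => if hr : r < rows then v (⟨r, hr⟩, i) else 0, fun c => ?_⟩
  rw [← hvecMul, ← hv]
  simp

theorem sum_range_single_dotProduct {R b : Type*} [NonUnitalNonAssocSemiring R] [Fintype b]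
    {n r : ℕ} (hr : r < n) (v : b → R) (g : ℕ → b → R) :
    ∑ i ∈ Finset.range n, (Pi.single r v : ℕ → b → R) i ⬝ᵥ g i = v ⬝ᵥ g r := by
  rw [Finset.sum_eq_single_of_mem r (Finset.mem_range.2 hr), Pi.single_eq_same]
  intro i _ hi
  rw [Pi.single_eq_of_ne hi, zero_dotProduct]

theorem dotProduct_mem_rowSpace_hankel {d : ℕ} (f : ℕ → Fin d → ℝ) {rows cols r : ℕ}
    (hr : r < rows) (η : Fin d → ℝ) :
    (fun c : Fin cols => η ⬝ᵥ f (c + r)) ∈ rowSpace (hankel f rows cols) :=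
  mem_rowSpace_hankel_iff.2
    ⟨Pi.single r η, fun c => (sum_range_single_dotProduct hr η fun r => f (c + r)).symm⟩

/-- The block row `f(k), f(k+1), …` which is the last one of the Hankel matrix with `k + 1` block
rows. -/
def blockRow {d : ℕ} (f : ℕ → Fin d → ℝ) (k cols : ℕ) : Matrix (Fin d) (Fin cols) ℝ :=
  of fun i c => f (k + c) i

theorem rowSpace_hankel_succ {d : ℕ} (f : ℕ → Fin d → ℝ) (k cols : ℕ) :
    rowSpace (hankel f (k + 1) cols) = rowSpace (hankel f k cols) ⊔ rowSpace (blockRow f k cols) :=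
  rowSpace_succ _

theorem rowSpace_Gkt (u : ℕ → Fin m → ℝ) (y : ℕ → Fin p → ℝ) (k t : ℕ) :
    rowSpace (Gkt u y k t) =
      rowSpace (hankel y k (t - k)) ⊔ rowSpace (hankel u (k + 1) (t - k)) :=
  rowSpace_fromRows _ _

theorem rowSpace_Hkt (u : ℕ → Fin m → ℝ) (y : ℕ → Fin p → ℝ) (k t : ℕ) :
    rowSpace (Hkt u y k t) = rowSpace (Gkt u y k t) ⊔ rowSpace (blockRow y k (t - k)) := by
  rw [Hkt, rowSpace_fromRows, rowSpace_hankel_succ, rowSpace_Gkt, sup_right_comm]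

/-- The leading output coefficients of the difference equations of order `k` that the data satisfy:
the vectors `η` for which `η ⬝ᵥ y (k + ·)` is a combination of the rows of `G_{k,t}`. -/
def leadSpace (u : ℕ → Fin m → ℝ) (y : ℕ → Fin p → ℝ) (t k : ℕ) : Submodule ℝ (Fin p → ℝ) :=
  (rowSpace (Gkt u y k t)).comap (blockRow y k (t - k)).vecMulLinear

theorem deltaKT_eq_finrank_quotient (u : ℕ → Fin m → ℝ) (y : ℕ → Fin p → ℝ) (k t : ℕ) :
    deltaKT u y k t = finrank ℝ ((Fin p → ℝ) ⧸ leadSpace u y t k) := by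
  rw [deltaKT, rank_eq_rank_add_finrank_quotient (rowSpace_Hkt u y k t), Nat.add_sub_cancel_left]
  rfl

theorem deltaKT_eq_zero_iff {u : ℕ → Fin m → ℝ} {y : ℕ → Fin p → ℝ} {k : ℕ} :
    deltaKT u y k t = 0 ↔ leadSpace u y t k = ⊤ := by
  rw [deltaKT_eq_finrank_quotient, finrank_zero_iff, Submodule.Quotient.subsingleton_iff]

theorem mem_leadSpace_iff {u : ℕ → Fin m → ℝ} {y : ℕ → Fin p → ℝ} {k : ℕ} {η : Fin p → ℝ} :
    η ∈ leadSpace u y t k ↔ ∃ (a : ℕ → Fin p → ℝ) (b : ℕ → Fin m → ℝ), ∀ s, s + k < t →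
      η ⬝ᵥ y (s + k) = ∑ r ∈ Finset.range k, a r ⬝ᵥ y (s + r) +
        ∑ r ∈ Finset.range (k + 1), b r ⬝ᵥ u (s + r) := by
  have hη : (blockRow y k (t - k)).vecMulLinear η = fun c : Fin (t - k) => η ⬝ᵥ y (c + k) := by
    ext c
    simp only [vecMulLinear_apply, vecMul, blockRow, dotProduct, of_apply, add_comm]
  rw [leadSpace, mem_comap, hη, rowSpace_Gkt, mem_sup]
  constructor
  · rintro ⟨v, hv, w, hw, hvw⟩
    obtain ⟨a, ha⟩ := mem_rowSpace_hankel_iff.1 hv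
    obtain ⟨b, hb⟩ := mem_rowSpace_hankel_iff.1 hw
    refine ⟨a, b, fun s hs => ?_⟩
    rw [← ha ⟨s, by omega⟩, ← hb ⟨s, by omega⟩]
    exact (congrFun hvw ⟨s, by omega⟩).symm
  · rintro ⟨a, b, hab⟩
    exact ⟨_, mem_rowSpace_hankel_iff.2 ⟨a, fun _ => rfl⟩, _,
      mem_rowSpace_hankel_iff.2 ⟨b, fun _ => rfl⟩, funext fun c => (hab c (by omega)).symm⟩

theorem leadSpace_mono (u : ℕ → Fin m → ℝ) (y : ℕ → Fin p → ℝ) (t : ℕ) :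
    Monotone (leadSpace u y t) := by
  refine monotone_nat_of_le_succ fun k η hη => ?_
  obtain ⟨a, b, hab⟩ := mem_leadSpace_iff.1 hη
  refine mem_leadSpace_iff.2
    ⟨fun r => Nat.casesOn r 0 a, fun r => Nat.casesOn r 0 b, fun s hs => ?_⟩
  simpa [Finset.sum_range_succ' _ k, Finset.sum_range_succ' _ (k + 1), add_assoc, add_comm,
    add_left_comm] using hab (s + 1) (by omega)

theorem deltaKT_pred (u : ℕ → Fin m → ℝ) (y : ℕ → Fin p → ℝ) (hu : ∃ s < t, u s ≠ 0) :
    deltaKT u y (t - 1) t = 0 := by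
  obtain ⟨s, hs, hus⟩ := hu
  refine deltaKT_eq_zero_iff.2 (eq_top_iff'.2 fun η => mem_leadSpace_iff.2
    ⟨0, Pi.single s ((η ⬝ᵥ y (t - 1) / (u s ⬝ᵥ u s)) • u s), fun s' hs' => ?_⟩)
  obtain rfl : s' = 0 := by omega
  have huu : u s ⬝ᵥ u s ≠ 0 := mt dotProduct_self_eq_zero.1 hus
  rw [sum_range_single_dotProduct (by omega) _ fun r => u (0 + r)]
  simp [huu]

theorem deltaKT_qT {u : ℕ → Fin m → ℝ} (y : ℕ → Fin p → ℝ) (hu : ∃ s < t, u s ≠ 0) :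
    deltaKT u y (qT u y t) t = 0 :=
  (Nat.sInf_mem ⟨t - 1, le_rfl, deltaKT_pred u y hu⟩ :
    qT u y t ∈ {k | k ≤ t - 1 ∧ deltaKT u y k t = 0}).2

theorem qT_le_of_deltaKT_eq_zero {u : ℕ → Fin m → ℝ} {y : ℕ → Fin p → ℝ}
    (hu : ∃ s < t, u s ≠ 0) {k : ℕ} (hk : deltaKT u y k t = 0) : qT u y t ≤ k := by
  obtain hkt | hkt := le_total k (t - 1)
  · exact Nat.sInf_le ⟨hkt, hk⟩
  · exact (Nat.sInf_le ⟨le_rfl, deltaKT_pred u y hu⟩ : qT u y t ≤ t - 1).trans hkt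

end Data

section Lag

variable {m p : ℕ} (sys : LinSys m p)

theorem rowSpace_obsMat_succ (k : ℕ) :
    rowSpace (obsMat sys (k + 1)) = rowSpace (obsMat sys k) ⊔ rowSpace (sys.C * sys.A ^ k) :=
  rowSpace_succ _

theorem rank_obsMat_succ (k : ℕ) :
    (obsMat sys (k + 1)).rank = (obsMat sys k).rank + finrank ℝ
      ((Fin p → ℝ) ⧸ (rowSpace (obsMat sys k)).comap (sys.C * sys.A ^ k).vecMulLinear) :=
  rank_eq_rank_add_finrank_quotient (rowSpace_obsMat_succ sys k)

theorem rank_obsMat_le_n (k : ℕ) : (obsMat sys k).rank ≤ sys.n := by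
  simpa using (obsMat sys k).rank_le_card_width

theorem rank_obsMat_lag_succ : (obsMat sys (lag sys + 1)).rank = (obsMat sys (lag sys)).rank := by
  refine Nat.sInf_mem (s := {k | (obsMat sys (k + 1)).rank = (obsMat sys k).rank}) ?_
  by_contra! hne
  have hmono : StrictMono fun k => (obsMat sys k).rank := strictMono_nat_of_lt_succ fun k =>
    lt_of_le_of_ne (rank_obsMat_succ sys k ▸ Nat.le_add_right _ _)
      fun h => Set.eq_empty_iff_forall_notMem.1 hne k h.symm
  exact (rank_obsMat_le_n sys (sys.n + 1)).not_gt (hmono.le_apply (x := sys.n + 1))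

theorem lag_le_of_rank_obsMat_eq_n {k : ℕ} (hk : (obsMat sys k).rank = sys.n) : lag sys ≤ k :=
  Nat.sInf_le (((rank_obsMat_le_n sys (k + 1)).trans_eq hk.symm).antisymm
    (rank_obsMat_succ sys k ▸ Nat.le_add_right _ _))

theorem rank_obsMat_eq_n {k : ℕ}
    (h : ∀ ξ, (∀ r < k, sys.C *ᵥ (sys.A ^ r *ᵥ ξ) = 0) → ξ = 0) :
    (obsMat sys k).rank = sys.n := by
  have hker : LinearMap.ker (obsMat sys k).mulVecLin = ⊥ := by
    refine (Submodule.eq_bot_iff _).2 fun ξ hξ => h ξ fun r hr => funext fun i => ?_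
    rw [mulVec_mulVec]
    exact congrFun (LinearMap.mem_ker.1 hξ) (⟨r, hr⟩, i)
  rw [Matrix.rank, LinearMap.finrank_range_of_inj (LinearMap.ker_eq_bot.1 hker), finrank_fin_fun]

end Lag

namespace ExplainsWith

variable {m p t : ℕ} {sys : LinSys m p} {u : ℕ → Fin m → ℝ} {y : ℕ → Fin p → ℝ}
  {x : ℕ → Fin sys.n → ℝ}

theorem state_sub_mem_rowSpace (hx : ExplainsWith sys t u y x) {k r : ℕ} (hr : r ≤ k)
    (ν : Fin sys.n → ℝ) :
    (fun c : Fin (t - k) => ν ⬝ᵥ x (c + r) - (ν ᵥ* sys.A ^ r) ⬝ᵥ x c) ∈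
      rowSpace (hankel u (k + 1) (t - k)) := by
  induction r generalizing ν with
  | zero => simp [← Pi.zero_def]
  | succ r ih =>
    convert add_mem (ih (by omega) (ν ᵥ* sys.A))
      (dotProduct_mem_rowSpace_hankel u (by omega : r < k + 1) (ν ᵥ* sys.B)) using 1
    ext c
    rw [← add_assoc, (hx (c + r) (by omega)).1, dotProduct_add, dotProduct_mulVec,
      dotProduct_mulVec, pow_succ', ← vecMul_vecMul, Pi.add_apply, add_sub_right_comm]

theorem output_sub_mem_rowSpace (hx : ExplainsWith sys t u y x) {k r : ℕ} (hr : r ≤ k)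
    (η : Fin p → ℝ) :
    (fun c : Fin (t - k) => η ⬝ᵥ y (c + r) - (η ᵥ* (sys.C * sys.A ^ r)) ⬝ᵥ x c) ∈
      rowSpace (hankel u (k + 1) (t - k)) := by
  convert add_mem (hx.state_sub_mem_rowSpace hr (η ᵥ* sys.C))
    (dotProduct_mem_rowSpace_hankel u (Nat.lt_succ_of_le hr) (η ᵥ* sys.D)) using 1
  ext c
  rw [(hx (c + r) (by omega)).2, dotProduct_add, dotProduct_mulVec, dotProduct_mulVec,
    ← vecMul_vecMul, Pi.add_apply, add_sub_right_comm]

theorem dotProduct_state_mem_rowSpace_Gkt (hx : ExplainsWith sys t u y x) {k : ℕ}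
    {ν : Fin sys.n → ℝ} (hν : ν ∈ rowSpace (obsMat sys k)) :
    (fun c : Fin (t - k) => ν ⬝ᵥ x c) ∈ rowSpace (Gkt u y k t) := by
  let X : Matrix (Fin sys.n) (Fin (t - k)) ℝ := of fun j c => x c j
  suffices h : rowSpace (obsMat sys k) ≤ (rowSpace (Gkt u y k t)).comap X.vecMulLinear from h hν
  refine span_le.2 ?_
  rintro _ ⟨⟨r, i⟩, rfl⟩
  have hrow : (obsMat sys k).row (r, i) = Pi.single i 1 ᵥ* (sys.C * sys.A ^ (r : ℕ)) := by
    rw [single_one_vecMul]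
    rfl
  have hy := dotProduct_mem_rowSpace_hankel y (cols := t - k) r.2 (Pi.single i 1)
  have hyx := hx.output_sub_mem_rowSpace r.2.le (Pi.single i 1)
  rw [SetLike.mem_coe, mem_comap, rowSpace_Gkt, hrow]
  convert sub_mem (mem_sup_left hy) (mem_sup_right hyx) using 1
  ext c
  exact (sub_sub_cancel _ _).symm

theorem comap_obsMat_le_leadSpace (hx : ExplainsWith sys t u y x) (k : ℕ) :
    (rowSpace (obsMat sys k)).comap (sys.C * sys.A ^ k).vecMulLinear ≤ leadSpace u y t k := by
  intro η hη
  have hyx := hx.output_sub_mem_rowSpace (le_refl k) η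
  rw [leadSpace, mem_comap]
  convert add_mem (rowSpace_Gkt u y k t ▸ mem_sup_right hyx)
    (hx.dotProduct_state_mem_rowSpace_Gkt hη) using 1
  ext c
  simp [vecMul, dotProduct, blockRow, add_comm]

theorem rank_obsMat_add_deltaKT_le (hx : ExplainsWith sys t u y x) (k : ℕ) :
    (obsMat sys k).rank + deltaKT u y k t ≤ (obsMat sys (k + 1)).rank := by
  rw [rank_obsMat_succ, deltaKT_eq_finrank_quotient]
  exact Nat.add_le_add_left (finrank_quotient_antitone (hx.comap_obsMat_le_leadSpace k)) _

theorem sum_deltaKT_le_rank_obsMat (hx : ExplainsWith sys t u y x) (k : ℕ) :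
    ∑ i ∈ Finset.range k, deltaKT u y i t ≤ (obsMat sys k).rank := by
  induction k with
  | zero => exact Nat.zero_le _
  | succ k ih =>
    rw [Finset.sum_range_succ]
    exact (Nat.add_le_add_right ih _).trans (hx.rank_obsMat_add_deltaKT_le k)

end ExplainsWith

namespace Explains

variable {m p t : ℕ} {sys : LinSys m p} {u : ℕ → Fin m → ℝ} {y : ℕ → Fin p → ℝ}

theorem lMin_le_lag (h : Explains sys t u y) : lMin t u y ≤ lag sys :=
  Nat.sInf_le (s := {ℓ | ∃ sys : LinSys m p, Explains sys t u y ∧ lag sys = ℓ}) ⟨sys, h, rfl⟩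

theorem nMin_le_n (h : Explains sys t u y) : nMin t u y ≤ sys.n :=
  Nat.sInf_le (s := {n | ∃ sys : LinSys m p, Explains sys t u y ∧ sys.n = n}) ⟨sys, h, rfl⟩

theorem sum_deltaKT_le_n (h : Explains sys t u y) (k : ℕ) :
    ∑ i ∈ Finset.range k, deltaKT u y i t ≤ sys.n :=
  let ⟨_, hx⟩ := h
  (hx.sum_deltaKT_le_rank_obsMat k).trans (rank_obsMat_le_n sys k)

theorem qT_le_lag (h : Explains sys t u y) (hu : ∃ s < t, u s ≠ 0) : qT u y t ≤ lag sys := by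
  obtain ⟨x, hx⟩ := h
  refine qT_le_of_deltaKT_eq_zero hu ?_
  have := hx.rank_obsMat_add_deltaKT_le (lag sys)
  have := rank_obsMat_lag_succ sys
  omega

end Explains

namespace LinSys

variable {m p : ℕ} {X : Type*} [AddCommGroup X] [Module ℝ X] [FiniteDimensional ℝ X]
  (A : X →ₗ[ℝ] X) (B : (Fin m → ℝ) →ₗ[ℝ] X) (C : X →ₗ[ℝ] Fin p → ℝ)
  (D : (Fin m → ℝ) →ₗ[ℝ] Fin p → ℝ)

/-- The matrices, in some basis of the state space `X`, of a linear system given by linear maps. -/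
noncomputable def ofLinearMaps : LinSys m p where
  n := finrank ℝ X
  A := LinearMap.toMatrix' ((finBasis ℝ X).equivFun.toLinearMap ∘ₗ A ∘ₗ
    (finBasis ℝ X).equivFun.symm.toLinearMap)
  B := LinearMap.toMatrix' ((finBasis ℝ X).equivFun.toLinearMap ∘ₗ B)
  C := LinearMap.toMatrix' (C ∘ₗ (finBasis ℝ X).equivFun.symm.toLinearMap)
  D := LinearMap.toMatrix' D

/-- The coordinates of the abstract states in the basis used by `ofLinearMaps`. -/
noncomputable def stateEquiv : X ≃ₗ[ℝ] Fin (ofLinearMaps A B C D).n → ℝ :=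
  (finBasis ℝ X).equivFun

theorem ofLinearMaps_A_mulVec (ξ : X) :
    (ofLinearMaps A B C D).A *ᵥ stateEquiv A B C D ξ = stateEquiv A B C D (A ξ) :=
  (LinearMap.toMatrix'_mulVec _ _).trans
    (congrArg (stateEquiv A B C D ∘ A) ((stateEquiv A B C D).symm_apply_apply ξ))

theorem ofLinearMaps_B_mulVec (v : Fin m → ℝ) :
    (ofLinearMaps A B C D).B *ᵥ v = stateEquiv A B C D (B v) :=
  LinearMap.toMatrix'_mulVec _ _

theorem ofLinearMaps_C_mulVec (ξ : X) :
    (ofLinearMaps A B C D).C *ᵥ stateEquiv A B C D ξ = C ξ :=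
  (LinearMap.toMatrix'_mulVec _ _).trans
    (congrArg C ((stateEquiv A B C D).symm_apply_apply ξ))

theorem ofLinearMaps_D_mulVec (v : Fin m → ℝ) : (ofLinearMaps A B C D).D *ᵥ v = D v :=
  LinearMap.toMatrix'_mulVec _ _

theorem ofLinearMaps_A_pow_mulVec (r : ℕ) (ξ : X) :
    (ofLinearMaps A B C D).A ^ r *ᵥ stateEquiv A B C D ξ = stateEquiv A B C D ((A ^ r) ξ) := by
  induction r generalizing ξ with
  | zero => simp
  | succ r ih =>
    rw [pow_succ, ← mulVec_mulVec, ofLinearMaps_A_mulVec, ih, pow_succ, Module.End.mul_apply]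

variable {A B C D}

theorem explains_ofLinearMaps {t : ℕ} {u : ℕ → Fin m → ℝ} {y : ℕ → Fin p → ℝ} {x : ℕ → X}
    (hx : ∀ s < t, x (s + 1) = A (x s) + B (u s) ∧ y s = C (x s) + D (u s)) :
    Explains (ofLinearMaps A B C D) t u y := by
  refine ⟨fun s => stateEquiv A B C D (x s), fun s hs => ⟨?_, ?_⟩⟩
  · dsimp only
    rw [(hx s hs).1, ofLinearMaps_A_mulVec, ofLinearMaps_B_mulVec, map_add]
  · rw [(hx s hs).2, ofLinearMaps_C_mulVec, ofLinearMaps_D_mulVec]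

theorem lag_ofLinearMaps_le {k : ℕ} (h : ∀ ξ, (∀ r < k, C ((A ^ r) ξ) = 0) → ξ = 0) :
    lag (ofLinearMaps A B C D) ≤ k := by
  refine lag_le_of_rank_obsMat_eq_n _ (rank_obsMat_eq_n _ fun v hv => ?_)
  obtain ⟨ξ, rfl⟩ := (stateEquiv A B C D).surjective v
  rw [h ξ fun r hr => ?_, map_zero]
  rw [← hv r hr, ofLinearMaps_A_pow_mulVec, ofLinearMaps_C_mulVec]

end LinSys

section ObserverForm

variable {R U Y ι : Type*} [Ring R] [AddCommGroup U] [Module R U] [AddCommGroup Y] [Module R Y]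
  (μ : ι → ℕ) (Ψ : Y ≃ₗ[R] ι → R) (d : U →ₗ[R] ι → R) (α : ℕ → Y →ₗ[R] ι → R)
  (β : ℕ → U →ₗ[R] ι → R)

/-- The part of the output coordinates `Ψ (y (s + k))` that the difference equations with
coefficients `d`, `α`, `β` do not explain by inputs and outputs from time `s` on. The `i`-th
equation, of order `μ i`, is `partialResidual (μ i) s i = 0`; for `k < μ i` the value
`partialResidual k s i` is the `(i, k)`-coordinate of the state of the observer form at time `s`. -/
def partialResidual (u : ℕ → U) (y : ℕ → Y) : ℕ → ℕ → ι → R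
  | 0, s => Ψ (y s) - d (u s)
  | k + 1, s => partialResidual u y k (s + 1) - α k (y s) - β k (u s)

theorem partialResidual_eq (u : ℕ → U) (y : ℕ → Y) (k s : ℕ) :
    partialResidual Ψ d α β u y k s = Ψ (y (s + k)) - d (u (s + k)) -
      ∑ r ∈ Finset.range k, (α (k - 1 - r) (y (s + r)) + β (k - 1 - r) (u (s + r))) := by
  induction k generalizing s with
  | zero => simp [partialResidual]
  | succ k ih =>
    have hsub : ∀ r, k - 1 - r = k - (r + 1) := fun r => by omega
    simp only [partialResidual, ih, Finset.sum_range_succ', hsub, Nat.add_sub_cancel, Nat.sub_zero,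
      add_zero, add_assoc, add_comm 1]
    abel

/-- The `k`-th state coordinates of the observer form, extended by `0` to the indices `i` with
`μ i ≤ k`. -/
def stateCoord (k : ℕ) : ((Σ i, Fin (μ i)) → R) →ₗ[R] ι → R :=
  LinearMap.pi fun i => if h : k < μ i then LinearMap.proj ⟨i, k, h⟩ else 0

theorem stateCoord_of_lt {k : ℕ} {i : ι} (h : k < μ i) (ξ : (Σ i, Fin (μ i)) → R) :
    stateCoord μ k ξ i = ξ ⟨i, k, h⟩ := by
  simp [stateCoord, h]

theorem stateCoord_of_le {k : ℕ} {i : ι} (h : μ i ≤ k) (ξ : (Σ i, Fin (μ i)) → R) :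
    stateCoord μ k ξ i = 0 := by
  simp [stateCoord, h.not_gt]

/-- The output map of the observer form. -/
def observerC : ((Σ i, Fin (μ i)) → R) →ₗ[R] Y :=
  Ψ.symm.toLinearMap ∘ₗ stateCoord μ 0

/-- The feedthrough of the observer form. -/
def observerD : U →ₗ[R] Y :=
  Ψ.symm.toLinearMap ∘ₗ d

/-- The state transition of the observer form: a shift of the coordinates, corrected by feeding
back the output. -/
def observerA : Module.End R ((Σ i, Fin (μ i)) → R) :=
  LinearMap.pi fun j => LinearMap.proj j.1 ∘ₗ (stateCoord μ (j.2 + 1) + α j.2 ∘ₗ observerC μ Ψ)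

/-- The input map of the observer form. -/
def observerB : U →ₗ[R] (Σ i, Fin (μ i)) → R :=
  LinearMap.pi fun j => LinearMap.proj j.1 ∘ₗ (α j.2 ∘ₗ observerD Ψ d + β j.2)

theorem observerA_apply (ξ : (Σ i, Fin (μ i)) → R) (i : ι) (k : Fin (μ i)) :
    observerA μ Ψ α ξ ⟨i, k⟩ = stateCoord μ (k + 1) ξ i + α k (observerC μ Ψ ξ) i :=
  rfl

theorem observerB_apply (v : U) (i : ι) (k : Fin (μ i)) :
    observerB μ Ψ d α β v ⟨i, k⟩ = α k (observerD Ψ d v) i + β k v i :=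
  rfl

variable {μ Ψ d α β}

theorem stateCoord_observerA_pow_eq_zero {q : ℕ} {ξ : (Σ i, Fin (μ i)) → R}
    (hξ : ∀ r < q, observerC μ Ψ ((observerA μ Ψ α ^ r) ξ) = 0) {k r : ℕ} (hrk : r + k < q) :
    stateCoord μ k ((observerA μ Ψ α ^ r) ξ) = 0 := by
  induction k generalizing r with
  | zero => simpa [observerC] using hξ r hrk
  | succ k ih =>
    ext i
    obtain hi | hi := Nat.lt_or_ge (k + 1) (μ i)
    · have hshift := congrFun (ih (r := r + 1) (by omega)) i
      rw [stateCoord_of_lt μ (k.lt_succ_self.trans hi), pow_succ', Module.End.mul_apply,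
        observerA_apply, hξ r (by omega)] at hshift
      simpa using hshift
    · exact stateCoord_of_le μ hi _

theorem eq_zero_of_observerC_eq_zero {q : ℕ} (hμ : ∀ i, μ i ≤ q) {ξ : (Σ i, Fin (μ i)) → R}
    (hξ : ∀ r < q, observerC μ Ψ ((observerA μ Ψ α ^ r) ξ) = 0) : ξ = 0 := by
  ext ⟨i, k⟩
  have hk : 0 + (k : ℕ) < q := by simpa using k.2.trans_le (hμ i)
  have hcoord := congrFun (stateCoord_observerA_pow_eq_zero hξ hk) i
  rwa [stateCoord_of_lt μ k.2] at hcoord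

theorem eq_observerC_add_observerD {u : ℕ → U} {y : ℕ → Y} {s : ℕ} {ξ : (Σ i, Fin (μ i)) → R}
    (hξ : stateCoord μ 0 ξ = partialResidual Ψ d α β u y 0 s) :
    y s = observerC μ Ψ ξ + observerD Ψ d (u s) := by
  apply Ψ.injective
  simp [observerC, observerD, hξ, partialResidual]

theorem exists_observer_trajectory {t : ℕ} {u : ℕ → U} {y : ℕ → Y}
    (h : ∀ i s, s + μ i < t → partialResidual Ψ d α β u y (μ i) s i = 0) :
    ∃ x : ℕ → (Σ i, Fin (μ i)) → R, ∀ s < t,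
      x (s + 1) = observerA μ Ψ α (x s) + observerB μ Ψ d α β (u s) ∧
      y s = observerC μ Ψ (x s) + observerD Ψ d (u s) := by
  let x : ℕ → (Σ i, Fin (μ i)) → R := fun s => Nat.rec
    (fun j => partialResidual Ψ d α β u y j.2 0 j.1)
    (fun s ξ => observerA μ Ψ α ξ + observerB μ Ψ d α β (u s)) s
  have hx : ∀ s k i, s + k < t → k ≤ μ i →
      stateCoord μ k (x s) i = partialResidual Ψ d α β u y k s i := by
    intro s
    induction s with
    | zero =>
      intro k i hk hki
      obtain hki | rfl := hki.lt_or_eq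
      · exact stateCoord_of_lt μ hki _
      · rw [stateCoord_of_le μ le_rfl, h i 0 hk]
    | succ s ih =>
      intro k i hk hki
      obtain hki | rfl := hki.lt_or_eq
      · have hy : y s = observerC μ Ψ (x s) + observerD Ψ d (u s) :=
          eq_observerC_add_observerD (funext fun i => ih 0 i (by omega) (Nat.zero_le _))
        calc stateCoord μ k (x (s + 1)) i
            = (observerA μ Ψ α (x s) + observerB μ Ψ d α β (u s)) ⟨i, k, hki⟩ :=
              stateCoord_of_lt μ hki _
          _ = stateCoord μ (k + 1) (x s) i + α k (y s) i + β k (u s) i := by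
              rw [Pi.add_apply, observerA_apply, observerB_apply, hy, map_add, Pi.add_apply,
                ← add_assoc, ← add_assoc]
          _ = partialResidual Ψ d α β u y k (s + 1) i := by
              rw [ih (k + 1) i (by omega) hki]
              simp only [partialResidual, Pi.sub_apply]
              abel
      · rw [stateCoord_of_le μ le_rfl, h i (s + 1) hk]
  exact ⟨x, fun s hs => ⟨rfl, eq_observerC_add_observerD
    (funext fun i => hx s 0 i hs (Nat.zero_le _))⟩⟩

end ObserverForm

section Attainment

variable {m p : ℕ}

theorem exists_explains_lag_le_of_partialResidual_eq_zero {ι : Type*} [Fintype ι] {μ : ι → ℕ}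
    {Ψ : (Fin p → ℝ) ≃ₗ[ℝ] ι → ℝ} {d : (Fin m → ℝ) →ₗ[ℝ] ι → ℝ}
    {α : ℕ → (Fin p → ℝ) →ₗ[ℝ] ι → ℝ} {β : ℕ → (Fin m → ℝ) →ₗ[ℝ] ι → ℝ} {t q : ℕ}
    {u : ℕ → Fin m → ℝ} {y : ℕ → Fin p → ℝ} (hμ : ∀ i, μ i ≤ q)
    (h : ∀ i s, s + μ i < t → partialResidual Ψ d α β u y (μ i) s i = 0) :
    ∃ sys : LinSys m p, Explains sys t u y ∧ lag sys ≤ q ∧ sys.n = ∑ i, μ i := by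
  obtain ⟨x, hx⟩ := exists_observer_trajectory h
  refine ⟨_, LinSys.explains_ofLinearMaps hx,
    LinSys.lag_ofLinearMaps_le fun ξ => eq_zero_of_observerC_eq_zero hμ, ?_⟩
  simp [LinSys.ofLinearMaps]

theorem exists_explains_lag_le_of_basis_mem_leadSpace {μ : Fin p → ℕ} {q t : ℕ} {u : ℕ → Fin m → ℝ}
    {y : ℕ → Fin p → ℝ} (b : Basis (Fin p) ℝ (Fin p → ℝ))
    (hμ : ∀ i, μ i ≤ q ∧ b i ∈ leadSpace u y t (μ i)) :
    ∃ sys : LinSys m p, Explains sys t u y ∧ lag sys ≤ q ∧ sys.n = ∑ i, μ i := by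
  choose a c hac using fun i => mem_leadSpace_iff.1 (hμ i).2
  have hb : IsUnit (of b) := linearIndependent_rows_iff_isUnit.1 b.linearIndependent
  let Ψ : (Fin p → ℝ) ≃ₗ[ℝ] Fin p → ℝ := toLinearEquiv' (of b) hb.invertible
  let d : (Fin m → ℝ) →ₗ[ℝ] Fin p → ℝ := (of fun i => c i (μ i)).mulVecLin
  let α : ℕ → (Fin p → ℝ) →ₗ[ℝ] Fin p → ℝ := fun k => (of fun i => a i (μ i - 1 - k)).mulVecLin
  let β : ℕ → (Fin m → ℝ) →ₗ[ℝ] Fin p → ℝ := fun k => (of fun i => c i (μ i - 1 - k)).mulVecLin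
  refine exists_explains_lag_le_of_partialResidual_eq_zero (Ψ := Ψ) (d := d) (α := α) (β := β)
    (fun i => (hμ i).1) fun i s hs => ?_
  have hΨ : Ψ (y (s + μ i)) i = b i ⬝ᵥ y (s + μ i) := rfl
  have hd : d (u (s + μ i)) i = c i (μ i) ⬝ᵥ u (s + μ i) := rfl
  have hrev : ∀ r ∈ Finset.range (μ i), μ i - 1 - (μ i - 1 - r) = r := fun r hr =>
    Nat.sub_sub_self (Nat.le_sub_one_of_lt (Finset.mem_range.1 hr))
  have hα : ∀ r ∈ Finset.range (μ i), α (μ i - 1 - r) (y (s + r)) i = a i r ⬝ᵥ y (s + r) :=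
    fun r hr => by simp [α, mulVec, hrev r hr]
  have hβ : ∀ r ∈ Finset.range (μ i), β (μ i - 1 - r) (u (s + r)) i = c i r ⬝ᵥ u (s + r) :=
    fun r hr => by simp [β, mulVec, hrev r hr]
  have hsum := hac i s hs
  rw [Finset.sum_range_succ, ← Finset.sum_congr rfl hα, ← Finset.sum_congr rfl hβ, ← hΨ, ← hd]
    at hsum
  simp only [partialResidual_eq, Pi.sub_apply, Finset.sum_apply, Pi.add_apply,
    Finset.sum_add_distrib, hsum]
  ring

theorem exists_explains_lag_le {q t : ℕ} {u : ℕ → Fin m → ℝ} {y : ℕ → Fin p → ℝ}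
    (hq : deltaKT u y q t = 0) :
    ∃ sys : LinSys m p, Explains sys t u y ∧ lag sys ≤ q ∧
      sys.n = ∑ i ∈ Finset.range (q + 1), deltaKT u y i t := by
  obtain ⟨b, μ, hμ, hsum⟩ := exists_basis_exists_degree (Pi.basisFun ℝ (Fin p))
    (leadSpace_mono u y t) (deltaKT_eq_zero_iff.1 hq)
  obtain ⟨sys, hexp, hlag, hn⟩ := exists_explains_lag_le_of_basis_mem_leadSpace b hμ
  refine ⟨sys, hexp, hlag, ?_⟩
  rw [hn, hsum, Finset.sum_range_succ, hq, add_zero]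
  simp only [deltaKT_eq_finrank_quotient]

end Attainment

/-- **Proposition 2.** If `u_{[0,t-1]} ≠ 0` then `ℓ_min,t = q_t` and
`n_min,t = Σ_{i=0}^{ℓ_min,t} δ_{i,t}`. -/
theorem lMin_eq_qT_and_nMin_eq_sum {m p : ℕ} (t : ℕ)
    (u : ℕ → Fin m → ℝ) (y : ℕ → Fin p → ℝ) (hu : ∃ s < t, u s ≠ 0) :
    lMin t u y = qT u y t ∧
    nMin t u y = ∑ i ∈ Finset.range (lMin t u y + 1), deltaKT u y i t := by
  obtain ⟨sys, hexp, hlag, hn⟩ := exists_explains_lag_le (deltaKT_qT y hu)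
  have hl : lMin t u y = qT u y t := by
    refine le_antisymm (hexp.lMin_le_lag.trans hlag) (le_csInf ⟨_, sys, hexp, rfl⟩ ?_)
    rintro _ ⟨sys', hexp', rfl⟩
    exact hexp'.qT_le_lag hu
  refine ⟨hl, ?_⟩
  rw [hl]
  refine le_antisymm (hexp.nMin_le_n.trans_eq hn) (le_csInf ⟨_, sys, hexp, rfl⟩ ?_)
  rintro _ ⟨sys', hexp', rfl⟩
  exact hexp'.sum_deltaKT_le_n _
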